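/- The set of eigenvalues of the imaginary cubic oscillator has no accumulation point in ℂ: for every λ₀ ∈ ℂ there exists r > 0 such that every eigenvalue λ with |λ − λ₀| < r satisfies λ = λ₀. (The spectrum of the imaginary cubic oscillator is discrete.) -/

import Mathlib

open MeasureTheory

/-- `lam` is an eigenvalue of the imaginary cubic oscillator `H = p² + i x³`. -/
def IsEigenvalueICO (lam : ℂ) : Prop :=
  ∃ ψ : ℝ → ℂ, ψ ≠ 0 ∧ ContDiff ℝ 2 ψ ∧
    Integrable (fun x : ℝ => ‖ψ x‖ ^ 2) ∧
    ∀ x : ℝ, -(deriv (deriv ψ) x) + Complex.I * (x : ℂ) ^ 3 * ψ x = lam * ψ x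

/-!
The operator `H = -d²/dx² + i x³` has a Hilbert–Schmidt shifted inverse `(H + 1)⁻¹`. Indeed, if
`-f'' + (i x³ + 1) f = g` with `f` and `g` square integrable, then pairing the equation with `f`
and taking real parts bounds `∫ |f'|² + |f|² / 2`, while pairing it with `x f` and taking imaginary
parts bounds `∫ x⁴ |f|²`; together these give `(1 + x²) |f x|² ≤ 8 ∫ |g|²` pointwise. Square
integrability makes the boundary terms harmless along suitable sequences tending to `±∞`.
Applying Gram–Schmidt to eigenfunctions of finitely many distinct eigenvalues `λᵢ` triangularises
the inverse, and the pointwise bound then yields `∑ |λᵢ + 1|⁻² ≤ 8 ∫ (1 + x²)⁻¹ = 8π`. So every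
disc contains only finitely many eigenvalues.
-/

open Filter Set InnerProductSpace
open scoped ComplexConjugate RealInnerProductSpace

section HilbertSchmidt

variable {ι 𝕜 V : Type*} [RCLike 𝕜] [NormedAddCommGroup V] [InnerProductSpace 𝕜 V]

theorem sum_norm_sq_le_of_norm_sum_mul_sq_le [Fintype ι] {z : ι → 𝕜} {K : ℝ} (hK : 0 ≤ K)
    (h : ∀ a : ι → 𝕜, ‖∑ i, a i * z i‖ ^ 2 ≤ K * ∑ i, ‖a i‖ ^ 2) :
    ∑ i, ‖z i‖ ^ 2 ≤ K := by
  set S : ℝ := ∑ i, ‖z i‖ ^ 2 with hS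
  have hsum : ∑ i, conj (z i) * z i = (S : 𝕜) := by
    simp only [hS, RCLike.ofReal_sum, RCLike.conj_mul, RCLike.ofReal_pow]
  have hconj : S ^ 2 ≤ K * S := by
    simpa only [hsum, RCLike.norm_ofReal, sq_abs, RCLike.norm_conj] using h fun i ↦ conj (z i)
  rcases (show 0 ≤ S by positivity).eq_or_lt with hzero | hpos
  · exact hzero ▸ hK
  · exact le_of_mul_le_mul_right (by rwa [← sq]) hpos

section Triangularisation

variable [LinearOrder ι] [LocallyFiniteOrderBot ι] [WellFoundedLT ι]
  {R : V →ₗ[𝕜] V} {v : ι → V} {μ : ι → 𝕜}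

theorem inner_gramSchmidt_map_eq (hR : ∀ i, R (v i) = μ i • v i) (i : ι) :
    inner 𝕜 (gramSchmidt 𝕜 v i) (R (gramSchmidt 𝕜 v i)) =
      μ i * inner 𝕜 (gramSchmidt 𝕜 v i) (gramSchmidt 𝕜 v i) := by
  have hmap : Submodule.span 𝕜 (v '' Iic i) ≤
      (𝕜 ∙ gramSchmidt 𝕜 v i)ᗮ.comap (R - μ i • LinearMap.id) := by
    rw [Submodule.span_le]
    rintro _ ⟨j, hj, rfl⟩
    rw [SetLike.mem_coe, Submodule.mem_comap, Submodule.mem_orthogonal_singleton_iff_inner_right,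
      LinearMap.sub_apply, LinearMap.smul_apply, LinearMap.id_apply, hR, ← sub_smul,
      inner_smul_right]
    rcases (mem_Iic.mp hj).eq_or_lt with rfl | hlt
    · rw [sub_self, zero_mul]
    · rw [gramSchmidt_inv_triangular 𝕜 v hlt, mul_zero]
  have hperp := (Submodule.mem_orthogonal_singleton_iff_inner_right).mp
    (hmap (gramSchmidt_mem_span 𝕜 v le_rfl))
  rwa [LinearMap.sub_apply, LinearMap.smul_apply, LinearMap.id_apply, inner_sub_right,
    inner_smul_right, sub_eq_zero] at hperp

theorem norm_eigenvalue_le_norm_map_gramSchmidtNormed (hv : LinearIndependent 𝕜 v)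
    (hR : ∀ i, R (v i) = μ i • v i) (i : ι) :
    ‖μ i‖ ≤ ‖R (gramSchmidtNormed 𝕜 v i)‖ := by
  set u := gramSchmidt 𝕜 v i with hu
  have hpos : 0 < ‖u‖ := norm_pos_iff.mpr (gramSchmidt_ne_zero i hv)
  have hprod : ‖μ i‖ * ‖u‖ * ‖u‖ ≤ ‖R u‖ * ‖u‖ := by
    calc ‖μ i‖ * ‖u‖ * ‖u‖ = ‖inner 𝕜 u (R u)‖ := by
          rw [inner_gramSchmidt_map_eq hR, inner_self_eq_norm_sq_to_K, norm_mul, norm_pow,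
            RCLike.norm_ofReal, abs_norm, mul_assoc, sq]
      _ ≤ ‖R u‖ * ‖u‖ := by rw [mul_comm]; exact norm_inner_le_norm u (R u)
  calc ‖μ i‖ ≤ ‖R u‖ / ‖u‖ := (le_div_iff₀ hpos).mpr (le_of_mul_le_mul_right hprod hpos)
    _ = ‖R (gramSchmidtNormed 𝕜 v i)‖ := by
      rw [gramSchmidtNormed, ← hu, map_smul, norm_smul, norm_inv, RCLike.norm_ofReal, abs_norm,
        div_eq_inv_mul]

end Triangularisation

variable {X : Type*} [MeasurableSpace X] {ν : Measure X}

theorem sum_norm_eigenvalue_sq_le_integral {n : ℕ} {R : V →ₗ[𝕜] V} {v : Fin n → V} {μ : Fin n → 𝕜}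
    (hv : LinearIndependent 𝕜 v) (hμ : ∀ i, R (v i) = μ i • v i)
    {ev : V →ₗ[𝕜] X → 𝕜} (hint : ∀ u, Integrable (fun x ↦ ‖ev u x‖ ^ 2) ν)
    (hnorm : ∀ u, ∫ x, ‖ev u x‖ ^ 2 ∂ν = ‖u‖ ^ 2)
    {k : X → ℝ} (hk : Integrable k ν) (hk0 : ∀ x, 0 ≤ k x)
    (hR : ∀ u x, ‖ev (R u) x‖ ^ 2 ≤ k x * ‖u‖ ^ 2) :
    ∑ i, ‖μ i‖ ^ 2 ≤ ∫ x, k x ∂ν := by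
  set e := gramSchmidtNormed 𝕜 v
  have he : Orthonormal 𝕜 e := gramSchmidtNormed_orthonormal hv
  have hpoint (x : X) : ∑ i, ‖ev (R (e i)) x‖ ^ 2 ≤ k x := by
    refine sum_norm_sq_le_of_norm_sum_mul_sq_le (hk0 x) fun a ↦ ?_
    have hsum : ‖∑ i, a i • e i‖ ^ 2 = ∑ i, ‖a i‖ ^ 2 := by
      simpa only [LinearIsometry.toSpanSingleton_apply] using
        he.orthogonalFamily.norm_sum a Finset.univ
    simpa only [map_sum, map_smul, Finset.sum_apply, Pi.smul_apply, smul_eq_mul, hsum] using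
      hR (∑ i, a i • e i) x
  calc ∑ i, ‖μ i‖ ^ 2 ≤ ∑ i, ‖R (e i)‖ ^ 2 := by
        gcongr with i
        exact norm_eigenvalue_le_norm_map_gramSchmidtNormed hv hμ i
    _ = ∫ x, ∑ i, ‖ev (R (e i)) x‖ ^ 2 ∂ν := by
        rw [integral_finsetSum _ fun i _ ↦ hint _]
        simp only [hnorm]
    _ ≤ ∫ x, k x ∂ν := integral_mono (integrable_finsetSum _ fun i _ ↦ hint _) hk hpoint

theorem norm_Lp_two_sq_eq_integral (f : Lp 𝕜 2 ν) : ‖f‖ ^ 2 = ∫ x, ‖f x‖ ^ 2 ∂ν := by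
  apply RCLike.ofReal_injective (K := 𝕜)
  rw [RCLike.ofReal_pow, ← inner_self_eq_norm_sq_to_K, L2.inner_def, ← integral_ofReal]
  simp only [inner_self_eq_norm_sq_to_K, RCLike.ofReal_pow]

theorem coeFn_sum_smul_toLp_ae_eq [Fintype ι] {φ : ι → X → 𝕜} (hφ : ∀ i, MemLp (φ i) 2 ν)
    (a : ι → 𝕜) :
    ⇑(∑ i, a i • (hφ i).toLp) =ᵐ[ν] fun x ↦ ∑ i, a i * φ i x := by
  have hterm : ∀ᵐ x ∂ν, ∀ i, (a i • (hφ i).toLp : Lp 𝕜 2 ν) x = a i * φ i x := by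
    refine eventually_all.mpr fun i ↦ ?_
    filter_upwards [Lp.coeFn_smul (a i) (hφ i).toLp, (hφ i).coeFn_toLp] with x hsmul htoLp
    rw [hsmul, Pi.smul_apply, htoLp, smul_eq_mul]
  filter_upwards [Lp.coeFn_fun_finsetSum Finset.univ fun i ↦ a i • (hφ i).toLp, hterm]
    with x hsum hterm
  rw [hsum, Finset.sum_congr rfl fun i _ ↦ hterm i]

theorem linearIndependent_toLp [Finite ι] [TopologicalSpace X] [BorelSpace X] [ν.IsOpenPosMeasure]
    {φ : ι → X → 𝕜} (hφ : ∀ i, MemLp (φ i) 2 ν) (hcont : ∀ i, Continuous (φ i))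
    (hli : LinearIndependent 𝕜 φ) : LinearIndependent 𝕜 fun i ↦ (hφ i).toLp := by
  cases nonempty_fintype ι
  rw [Fintype.linearIndependent_iff] at hli ⊢
  intro a ha
  refine hli a ?_
  have hae : (fun x ↦ ∑ i, a i * φ i x) =ᵐ[ν] 0 :=
    (coeFn_sum_smul_toLp_ae_eq hφ a).symm.trans (ha ▸ Lp.coeFn_zero 𝕜 2 ν)
  have hzero := Measure.eq_of_ae_eq hae (by fun_prop) continuous_zero
  simpa only [funext_iff, Finset.sum_apply, Pi.smul_apply, smul_eq_mul] using hzero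

theorem sum_norm_sq_le_integral_of_norm_sq_le {n : ℕ} {φ : Fin n → X → 𝕜} {μ : Fin n → 𝕜}
    (hφ : ∀ i, MemLp (φ i) 2 ν) (hli : LinearIndependent 𝕜 fun i ↦ (hφ i).toLp)
    {k : X → ℝ} (hk : Integrable k ν) (hk0 : ∀ x, 0 ≤ k x)
    (hle : ∀ (a : Fin n → 𝕜) (x : X),
      ‖∑ i, a i * (μ i * φ i x)‖ ^ 2 ≤ k x * ∫ y, ‖∑ i, a i * φ i y‖ ^ 2 ∂ν) :
    ∑ i, ‖μ i‖ ^ 2 ≤ ∫ x, k x ∂ν := by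
  set b := Module.Basis.span hli
  set ev := b.constr 𝕜 φ
  set R := b.constr 𝕜 fun i ↦ μ i • b i
  have hev_apply (u) (x : X) : ev u x = ∑ i, b.repr u i * φ i x := by
    simp only [ev, b.constr_apply_fintype 𝕜, Finset.sum_apply, Pi.smul_apply, smul_eq_mul,
      b.equivFun_apply]
  have hevR_apply (u) (x : X) : ev (R u) x = ∑ i, b.repr u i * (μ i * φ i x) := by
    simp only [R, ev, b.constr_apply_fintype 𝕜 _ u, map_sum, map_smul, b.constr_basis,
      Finset.sum_apply, Pi.smul_apply, smul_eq_mul, b.equivFun_apply]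
  have hev_ae (u) : (fun x ↦ ‖ev u x‖ ^ 2) =ᵐ[ν] fun x ↦ ‖(u : Lp 𝕜 2 ν) x‖ ^ 2 := by
    have hu : (u : Lp 𝕜 2 ν) = ∑ i, b.repr u i • (hφ i).toLp := by
      conv_lhs => rw [← b.sum_repr u]
      simp only [b, Submodule.coe_sum, Submodule.coe_smul, Module.Basis.span_apply]
    filter_upwards [coeFn_sum_smul_toLp_ae_eq hφ (b.repr u)] with x hx
    rw [hu, hx, hev_apply]
  have hnorm (u) : ∫ x, ‖ev u x‖ ^ 2 ∂ν = ‖u‖ ^ 2 := by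
    rw [integral_congr_ae (hev_ae u), ← norm_Lp_two_sq_eq_integral, Submodule.coe_norm]
  have hint (u) : Integrable (fun x ↦ ‖(u : Lp 𝕜 2 ν) x‖ ^ 2) ν :=
    (memLp_two_iff_integrable_sq_norm (Lp.aestronglyMeasurable _)).mp (Lp.memLp _)
  refine sum_norm_eigenvalue_sq_le_integral b.linearIndependent (b.constr_basis 𝕜 _)
    (fun u ↦ (integrable_congr (hev_ae u)).mpr (hint u)) hnorm hk hk0
    fun u x ↦ ?_
  rw [← hnorm, hevR_apply]
  simp only [hev_apply]
  exact hle _ x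

end HilbertSchmidt

section RealLine

theorem frequently_atTop_deriv_nonpos {h h' : ℝ → ℝ} (hderiv : ∀ x, HasDerivAt h (h' x) x)
    (hint : Integrable h) (hnonneg : ∀ x, 0 ≤ h x) : ∃ᶠ x in atTop, h' x ≤ 0 := by
  rw [Filter.Frequently]
  intro hpos
  obtain ⟨c, hc⟩ := eventually_atTop.mp hpos
  have hmono : StrictMonoOn h (Ici c) := by
    refine strictMonoOn_of_deriv_pos (convex_Ici c)
      (fun x _ ↦ (hderiv x).continuousAt.continuousWithinAt) fun x hx ↦ ?_
    rw [(hderiv x).deriv]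
    exact not_le.mp (hc x (interior_subset hx))
  have hlower : 0 < h (c + 1) :=
    (hnonneg c).trans_lt (hmono self_mem_Ici (by simp) (by simp))
  have hsub : Ici (c + 1) ⊆ {x | h (c + 1) ≤ ‖h x‖} := fun x hx ↦
    (hmono.monotoneOn (by simp) (mem_Ici.mpr (by linarith [mem_Ici.mp hx])) hx).trans
      (Real.le_norm_self _)
  exact absurd ((measure_mono hsub).trans_lt (hint.measure_norm_ge_lt_top hlower))
    (by simp)

theorem frequently_atTop_mul_le {h : ℝ → ℝ} (hint : Integrable h) {ε : ℝ} (hε : 0 < ε) :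
    ∃ᶠ x in atTop, x * h x ≤ ε := by
  rw [Filter.Frequently]
  intro hlarge
  obtain ⟨c, hc⟩ := eventually_atTop.mp (hlarge.and (eventually_gt_atTop 0))
  refine not_integrableOn_Ioi_inv (a := c)
    ((hint.const_mul ε⁻¹).integrableOn.mono' (by fun_prop) ?_)
  filter_upwards [ae_restrict_mem measurableSet_Ioi] with x hx
  obtain ⟨hlt, hx0⟩ := hc x (mem_Ioi.mp hx).le
  rw [Real.norm_of_nonneg (inv_nonneg.mpr hx0.le), inv_mul_eq_div, inv_le_iff_one_le_mul₀ hx0,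
    div_mul_eq_mul_div, one_le_div hε, mul_comm]
  exact (not_le.mp hlt).le

theorem integrable_and_integral_le_of_sub_le_deriv {F F' P Q : ℝ → ℝ}
    (hderiv : ∀ x, HasDerivAt F (F' x) x) (hP : Continuous P) (hP0 : ∀ x, 0 ≤ P x)
    (hQ : Integrable Q) (hQ0 : ∀ x, 0 ≤ Q x) (hle : ∀ x, P x - Q x ≤ F' x)
    (hright : ∀ ε > 0, ∃ᶠ x in atTop, F x ≤ ε) (hleft : ∀ ε > 0, ∃ᶠ x in atTop, -ε ≤ F (-x)) :
    Integrable P ∧ ∫ x, P x ≤ ∫ x, Q x := by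
  have hbound : ∀ᶠ a in atTop, ∫ x in -a..a, P x ≤ ∫ x, Q x := by
    filter_upwards [eventually_ge_atTop 0] with a ha
    refine le_of_forall_pos_le_add fun ε hε ↦ ?_
    obtain ⟨b, hab, hb⟩ := (hright (ε / 2) (half_pos hε)).forall_exists_of_atTop a
    obtain ⟨c, hac, hc⟩ := (hleft (ε / 2) (half_pos hε)).forall_exists_of_atTop a
    have hcb : -c ≤ b := by linarith
    have hflux : ∫ x in -c..b, (P x - Q x) ≤ F b - F (-c) :=
      intervalIntegral.integral_le_sub_of_hasDeriv_right_of_le hcb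
        (fun x _ ↦ (hderiv x).continuousAt.continuousWithinAt)
        (fun x _ ↦ (hderiv x).hasDerivWithinAt)
        (hP.integrableOn_Icc.sub hQ.integrableOn) fun x _ ↦ hle x
    rw [intervalIntegral.integral_sub (hP.intervalIntegrable _ _) hQ.intervalIntegrable] at hflux
    have hPmono : ∫ x in -a..a, P x ≤ ∫ x in -c..b, P x :=
      intervalIntegral.integral_mono_interval (by linarith) (by linarith) hab
        (Eventually.of_forall hP0) (hP.intervalIntegrable _ _)
    have hQmono : ∫ x in -c..b, Q x ≤ ∫ x, Q x := by
      rw [intervalIntegral.integral_of_le hcb]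
      exact setIntegral_le_integral hQ (Eventually.of_forall hQ0)
    linarith
  have hint : Integrable P := by
    refine integrable_of_intervalIntegral_norm_bounded (∫ x, Q x)
      (fun _ ↦ hP.integrableOn_Ioc) tendsto_neg_atTop_atBot tendsto_id ?_
    simpa only [id, Real.norm_of_nonneg (hP0 _)] using hbound
  exact ⟨hint, le_of_tendsto
    (intervalIntegral_tendsto_integral hint tendsto_neg_atTop_atBot tendsto_id) hbound⟩

theorem le_integral_norm_deriv {h h' : ℝ → ℝ} (hderiv : ∀ x, HasDerivAt h (h' x) x)
    (hint : Integrable h) (hint' : Integrable h') (x : ℝ) : h x ≤ ∫ y, ‖h' y‖ := by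
  have hlim := tendsto_zero_of_hasDerivAt_of_integrableOn_Iic (a := x) (fun y _ ↦ hderiv y)
    hint'.integrableOn hint.integrableOn
  calc h x = ∫ y in Iic x, h' y := by
        rw [integral_Iic_of_hasDerivAt_of_tendsto' (fun y _ ↦ hderiv y) hint'.integrableOn hlim,
          sub_zero]
    _ ≤ ∫ y in Iic x, ‖h' y‖ :=
        integral_mono hint'.integrableOn hint'.norm.integrableOn fun y ↦ Real.le_norm_self _
    _ ≤ ∫ y, ‖h' y‖ :=
        setIntegral_le_integral hint'.norm (Eventually.of_forall fun y ↦ norm_nonneg _)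

end RealLine

section ResolventEstimate

theorem abs_inner_I_mul_le (z w : ℂ) : |⟪Complex.I * z, w⟫| ≤ ‖z‖ * ‖w‖ := by
  simpa only [norm_mul, Complex.norm_I, one_mul] using abs_real_inner_le_norm (Complex.I * z) w

theorem pow_four_mul_norm_sq_sub_le {x c : ℝ} {z z' w : ℂ} (hc : x ^ 4 ≤ x * c) :
    3 / 4 * (x ^ 4 * ‖z‖ ^ 2) - (3 / 2 * (‖z'‖ ^ 2 + ‖z‖ ^ 2 / 2) + ‖w‖ ^ 2 / 2) ≤
      1 * ⟪Complex.I * z, z'⟫ + x * (c * ‖z‖ ^ 2 - ⟪Complex.I * z, w⟫) := by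
  have him : x ^ 4 * ‖z‖ ^ 2 ≤ x * c * ‖z‖ ^ 2 :=
    mul_le_mul_of_nonneg_right hc (by positivity)
  have hderiv : -(‖z‖ ^ 2 / 2 + ‖z'‖ ^ 2 / 2) ≤ ⟪Complex.I * z, z'⟫ := by
    linarith [neg_le_of_abs_le (abs_inner_I_mul_le z z'), two_mul_le_add_sq ‖z‖ ‖z'‖]
  have hrhs : x * ⟪Complex.I * z, w⟫ ≤ (x ^ 4 * ‖z‖ ^ 2 + ‖z‖ ^ 2) / 4 + ‖w‖ ^ 2 / 2 := by
    calc x * ⟪Complex.I * z, w⟫ ≤ |x| * (‖z‖ * ‖w‖) := by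
          refine (le_abs_self _).trans ?_
          rw [abs_mul]
          gcongr
          exact abs_inner_I_mul_le z w
      _ ≤ x ^ 2 * ‖z‖ ^ 2 / 2 + ‖w‖ ^ 2 / 2 := by
          nlinarith [sq_nonneg (|x| * ‖z‖ - ‖w‖), sq_abs x]
      _ ≤ (x ^ 4 * ‖z‖ ^ 2 + ‖z‖ ^ 2) / 4 + ‖w‖ ^ 2 / 2 := by
          nlinarith [mul_nonneg (sq_nonneg (x ^ 2 - 1)) (sq_nonneg ‖z‖)]
  linarith [sq_nonneg ‖z'‖]

theorem abs_deriv_one_add_sq_mul_norm_sq_le (x : ℝ) (z w : ℂ) :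
    |2 * x * ‖z‖ ^ 2 + (1 + x ^ 2) * (2 * ⟪z, w⟫)| ≤
      5 / 2 * (x ^ 4 * ‖z‖ ^ 2) + 7 * (‖w‖ ^ 2 + ‖z‖ ^ 2 / 2) := by
  have habs : 2 * |x| ≤ 3 / 2 + x ^ 4 / 2 := by
    nlinarith [sq_nonneg (|x| - 1), sq_nonneg (x ^ 2 - 1), sq_abs x]
  have hinner : (1 + x ^ 2) * (2 * |⟪z, w⟫|) ≤ (2 + 2 * x ^ 4) * ‖z‖ ^ 2 + ‖w‖ ^ 2 := by
    calc (1 + x ^ 2) * (2 * |⟪z, w⟫|) ≤ (1 + x ^ 2) * (2 * (‖z‖ * ‖w‖)) := by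
          gcongr
          exact abs_real_inner_le_norm z w
      _ ≤ (1 + x ^ 2) ^ 2 * ‖z‖ ^ 2 + ‖w‖ ^ 2 := by
          nlinarith [sq_nonneg ((1 + x ^ 2) * ‖z‖ - ‖w‖)]
      _ ≤ (2 + 2 * x ^ 4) * ‖z‖ ^ 2 + ‖w‖ ^ 2 := by
          gcongr
          nlinarith [sq_nonneg (x ^ 2 - 1)]
  calc |2 * x * ‖z‖ ^ 2 + (1 + x ^ 2) * (2 * ⟪z, w⟫)|
      ≤ |2 * x * ‖z‖ ^ 2| + |(1 + x ^ 2) * (2 * ⟪z, w⟫)| := abs_add_le _ _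
    _ = 2 * |x| * ‖z‖ ^ 2 + (1 + x ^ 2) * (2 * |⟪z, w⟫|) := by
        rw [abs_mul, abs_mul, abs_mul, abs_mul, abs_two, abs_of_nonneg (sq_nonneg ‖z‖),
          abs_of_pos (show 0 < 1 + x ^ 2 by positivity)]
    _ ≤ (3 / 2 + x ^ 4 / 2) * ‖z‖ ^ 2 + ((2 + 2 * x ^ 4) * ‖z‖ ^ 2 + ‖w‖ ^ 2) := by gcongr
    _ ≤ 5 / 2 * (x ^ 4 * ‖z‖ ^ 2) + 7 * (‖w‖ ^ 2 + ‖z‖ ^ 2 / 2) := by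
        linarith [sq_nonneg ‖w‖]

/-- A square-integrable solution `f`, with derivative `f'`, of the inhomogeneous Schrödinger
equation `-f'' + q f = g` on the real line with square-integrable right-hand side `g`. -/
structure IsL2Solution (q f f' g : ℝ → ℂ) : Prop where
  hasDerivAt : ∀ x, HasDerivAt f (f' x) x
  hasDerivAt_deriv : ∀ x, HasDerivAt f' (q x * f x - g x) x
  memLp : MemLp f 2
  memLp_rhs : MemLp g 2

namespace IsL2Solution

variable {q f f' g : ℝ → ℂ}

theorem sum {ι : Type*} [Fintype ι] {f f' g : ι → ℝ → ℂ}
    (hf : ∀ i, IsL2Solution q (f i) (f' i) (g i)) (c : ι → ℂ) :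
    IsL2Solution q (fun x ↦ ∑ i, c i * f i x) (fun x ↦ ∑ i, c i * f' i x)
      fun x ↦ ∑ i, c i * g i x where
  hasDerivAt x := HasDerivAt.fun_sum fun i _ ↦ ((hf i).hasDerivAt x).const_mul (c i)
  hasDerivAt_deriv x := by
    refine (HasDerivAt.fun_sum fun i _ ↦ ((hf i).hasDerivAt_deriv x).const_mul (c i)).congr_deriv ?_
    rw [Finset.mul_sum, ← Finset.sum_sub_distrib]
    exact Finset.sum_congr rfl fun i _ ↦ by ring
  memLp := memLp_finsetSum _ fun i _ ↦ (hf i).memLp.const_mul (c i)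
  memLp_rhs := memLp_finsetSum _ fun i _ ↦ (hf i).memLp_rhs.const_mul (c i)

theorem integrable_norm_sq (hf : IsL2Solution q f f' g) : Integrable fun x ↦ ‖f x‖ ^ 2 :=
  (memLp_two_iff_integrable_sq_norm hf.memLp.aestronglyMeasurable).mp hf.memLp

theorem integrable_rhs_norm_sq (hf : IsL2Solution q f f' g) : Integrable fun x ↦ ‖g x‖ ^ 2 :=
  (memLp_two_iff_integrable_sq_norm hf.memLp_rhs.aestronglyMeasurable).mp hf.memLp_rhs

theorem continuous (hf : IsL2Solution q f f' g) : Continuous f :=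
  continuous_iff_continuousAt.mpr fun x ↦ (hf.hasDerivAt x).continuousAt

theorem continuous_deriv (hf : IsL2Solution q f f' g) : Continuous f' :=
  continuous_iff_continuousAt.mpr fun x ↦ (hf.hasDerivAt_deriv x).continuousAt

theorem hasDerivAt_inner (hf : IsL2Solution q f f' g) (x : ℝ) :
    HasDerivAt (fun y ↦ ⟪f y, f' y⟫)
      ((q x).re * ‖f x‖ ^ 2 - ⟪f x, g x⟫ + ‖f' x‖ ^ 2) x := by
  refine ((hf.hasDerivAt x).inner ℝ (hf.hasDerivAt_deriv x)).congr_deriv ?_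
  rw [inner_sub_right, real_inner_self_eq_norm_sq, Complex.inner _ (q x * f x),
    Complex.sq_norm (f x), Complex.normSq_apply]
  simp only [Complex.mul_re, Complex.mul_im, Complex.conj_re, Complex.conj_im]
  ring

theorem hasDerivAt_inner_I_mul (hf : IsL2Solution q f f' g) (x : ℝ) :
    HasDerivAt (fun y ↦ ⟪Complex.I * f y, f' y⟫)
      ((q x).im * ‖f x‖ ^ 2 - ⟪Complex.I * f x, g x⟫) x := by
  refine (((hf.hasDerivAt x).const_mul Complex.I).inner ℝ (hf.hasDerivAt_deriv x)).congr_deriv ?_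
  rw [inner_sub_right, Complex.inner _ (q x * f x), Complex.inner _ (f' x), Complex.sq_norm,
    Complex.normSq_apply]
  simp only [Complex.mul_re, Complex.mul_im, Complex.conj_re, Complex.conj_im, Complex.I_re,
    Complex.I_im]
  ring

theorem frequently_inner_deriv_nonpos (hf : IsL2Solution q f f' g) :
    ∃ᶠ x in atTop, ⟪f x, f' x⟫ ≤ 0 :=
  (frequently_atTop_deriv_nonpos (fun x ↦ (hf.hasDerivAt x).norm_sq) hf.integrable_norm_sq
    fun _ ↦ by positivity).mono fun x hx ↦ by linarith

theorem frequently_inner_deriv_neg_nonneg (hf : IsL2Solution q f f' g) :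
    ∃ᶠ x in atTop, 0 ≤ ⟪f (-x), f' (-x)⟫ := by
  have hderiv (x : ℝ) : HasDerivAt (fun y ↦ ‖f (-y)‖ ^ 2) (-(2 * ⟪f (-x), f' (-x)⟫)) x :=
    ((hf.hasDerivAt (-x)).norm_sq.comp x (hasDerivAt_neg x)).congr_deriv (mul_neg_one _)
  exact (frequently_atTop_deriv_nonpos hderiv hf.integrable_norm_sq.comp_neg
    fun _ ↦ by positivity).mono fun x hx ↦ by linarith

theorem integrable_energy_and_integral_le (hf : IsL2Solution q f f' g) (hq : ∀ x, 1 ≤ (q x).re) :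
    Integrable (fun x ↦ ‖f' x‖ ^ 2 + ‖f x‖ ^ 2 / 2) ∧
      ∫ x, (‖f' x‖ ^ 2 + ‖f x‖ ^ 2 / 2) ≤ ∫ x, ‖g x‖ ^ 2 / 2 := by
  have hc := hf.continuous
  have hc' := hf.continuous_deriv
  refine integrable_and_integral_le_of_sub_le_deriv hf.hasDerivAt_inner (by fun_prop)
    (fun x ↦ by positivity) (hf.integrable_rhs_norm_sq.div_const 2) (fun x ↦ by positivity)
    (fun x ↦ ?_) (fun ε hε ↦ hf.frequently_inner_deriv_nonpos.mono fun x hx ↦ hx.trans hε.le)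
    fun ε hε ↦ hf.frequently_inner_deriv_neg_nonneg.mono fun x hx ↦ by linarith
  have hre : ‖f x‖ ^ 2 ≤ (q x).re * ‖f x‖ ^ 2 := le_mul_of_one_le_left (by positivity) (hq x)
  have hcauchy := real_inner_le_norm (f x) (g x)
  have hyoung := two_mul_le_add_sq ‖f x‖ ‖g x‖
  linarith

theorem integrable_norm_deriv_sq (hf : IsL2Solution q f f' g) (hq : ∀ x, 1 ≤ (q x).re) :
    Integrable fun x ↦ ‖f' x‖ ^ 2 := by
  simpa only [Pi.sub_def, add_sub_cancel_right] using
    (hf.integrable_energy_and_integral_le hq).1.sub (hf.integrable_norm_sq.div_const 2)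

theorem integrable_inner_I_mul (hf : IsL2Solution q f f' g) (hq : ∀ x, 1 ≤ (q x).re) :
    Integrable fun x ↦ ⟪Complex.I * f x, f' x⟫ := by
  have hc := hf.continuous
  have hc' := hf.continuous_deriv
  refine (hf.integrable_norm_sq.add (hf.integrable_norm_deriv_sq hq)).mono'
    (by fun_prop) (Eventually.of_forall fun x ↦ ?_)
  calc ‖⟪Complex.I * f x, f' x⟫‖ ≤ ‖f x‖ * ‖f' x‖ := abs_inner_I_mul_le _ _
    _ ≤ ‖f x‖ ^ 2 + ‖f' x‖ ^ 2 := by nlinarith [sq_nonneg (‖f x‖ - ‖f' x‖)]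

theorem integrable_pow_four_and_integral_le (hf : IsL2Solution q f f' g)
    (hq : ∀ x, 1 ≤ (q x).re) (hq' : ∀ x, x ^ 4 ≤ x * (q x).im) :
    Integrable (fun x ↦ x ^ 4 * ‖f x‖ ^ 2) ∧
      ∫ x, x ^ 4 * ‖f x‖ ^ 2 ≤ 5 / 3 * ∫ x, ‖g x‖ ^ 2 := by
  have hc := hf.continuous
  have hinner := hf.integrable_inner_I_mul hq
  obtain ⟨henergy, henergy_le⟩ := hf.integrable_energy_and_integral_le hq
  have hg := hf.integrable_rhs_norm_sq.div_const 2
  obtain ⟨hint, hle⟩ := integrable_and_integral_le_of_sub_le_deriv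
    (fun x ↦ (hasDerivAt_id x).mul (hf.hasDerivAt_inner_I_mul x))
    (P := fun x ↦ 3 / 4 * (x ^ 4 * ‖f x‖ ^ 2)) (by fun_prop) (fun x ↦ by positivity)
    ((henergy.const_mul (3 / 2)).add hg) (fun x ↦ by dsimp only [Pi.add_apply]; positivity)
    (fun x ↦ pow_four_mul_norm_sq_sub_le (hq' x))
    (fun ε hε ↦ frequently_atTop_mul_le hinner hε)
    (fun ε hε ↦ (frequently_atTop_mul_le hinner.comp_neg hε).mono fun x hx ↦ by
      simpa using hx)
  simp only [Pi.add_apply] at hle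
  rw [integral_const_mul, integral_add (henergy.const_mul _) hg, integral_const_mul] at hle
  rw [integral_div] at hle henergy_le
  constructor
  · exact (integrable_const_mul_iff (by norm_num) _).mp hint
  · linarith

theorem one_add_sq_mul_norm_sq_le (hf : IsL2Solution q f f' g)
    (hq : ∀ x, 1 ≤ (q x).re) (hq' : ∀ x, x ^ 4 ≤ x * (q x).im) (x : ℝ) :
    (1 + x ^ 2) * ‖f x‖ ^ 2 ≤ 8 * ∫ y, ‖g y‖ ^ 2 := by
  have hc := hf.continuous
  have hc' := hf.continuous_deriv
  obtain ⟨henergy, henergy_le⟩ := hf.integrable_energy_and_integral_le hq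
  obtain ⟨hfour, hfour_le⟩ := hf.integrable_pow_four_and_integral_le hq hq'
  have hdom := (hfour.const_mul (5 / 2)).add (henergy.const_mul 7)
  have hderiv (y : ℝ) : HasDerivAt (fun y ↦ (1 + y ^ 2) * ‖f y‖ ^ 2)
      (2 * y * ‖f y‖ ^ 2 + (1 + y ^ 2) * (2 * ⟪f y, f' y⟫)) y := by
    simpa only [Nat.cast_ofNat, Nat.add_one_sub_one, pow_one] using
      ((hasDerivAt_pow 2 y).const_add 1).fun_mul (hf.hasDerivAt y).norm_sq
  have hint : Integrable fun y ↦ (1 + y ^ 2) * ‖f y‖ ^ 2 := by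
    refine ((hf.integrable_norm_sq.const_mul (3 / 2)).add (hfour.const_mul (1 / 2))).mono'
      (by fun_prop) (Eventually.of_forall fun y ↦ ?_)
    rw [Real.norm_of_nonneg (by positivity), Pi.add_apply]
    nlinarith [mul_nonneg (sq_nonneg (y ^ 2 - 1)) (sq_nonneg ‖f y‖)]
  have hint' := hdom.mono' (f := fun y ↦ 2 * y * ‖f y‖ ^ 2 + (1 + y ^ 2) * (2 * ⟪f y, f' y⟫))
    (by fun_prop) (Eventually.of_forall fun y ↦ abs_deriv_one_add_sq_mul_norm_sq_le y (f y) (f' y))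
  rw [integral_div] at henergy_le
  calc (1 + x ^ 2) * ‖f x‖ ^ 2
      ≤ ∫ y, |2 * y * ‖f y‖ ^ 2 + (1 + y ^ 2) * (2 * ⟪f y, f' y⟫)| :=
        le_integral_norm_deriv hderiv hint hint' x
    _ ≤ ∫ y, (5 / 2 * (y ^ 4 * ‖f y‖ ^ 2) + 7 * (‖f' y‖ ^ 2 + ‖f y‖ ^ 2 / 2)) :=
        integral_mono hint'.abs hdom fun y ↦ abs_deriv_one_add_sq_mul_norm_sq_le y (f y) (f' y)
    _ = 5 / 2 * (∫ y, y ^ 4 * ‖f y‖ ^ 2) + 7 * ∫ y, (‖f' y‖ ^ 2 + ‖f y‖ ^ 2 / 2) := by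
        rw [integral_add (hfour.const_mul _) (henergy.const_mul _), integral_const_mul,
          integral_const_mul]
    _ ≤ 8 * ∫ y, ‖g y‖ ^ 2 := by
        linarith [show 0 ≤ ∫ y, ‖g y‖ ^ 2 from integral_nonneg fun y ↦ sq_nonneg ‖g y‖]

end IsL2Solution

end ResolventEstimate

theorem linearIndependent_of_map_eq_smul {K E ι : Type*} [Field K] [AddCommGroup E] [Module K E]
    (T : E →ₗ.[K] E) {lam : ι → K} (hlam : Function.Injective lam) {v : ι → T.domain}
    (hv : ∀ i, v i ≠ 0) (hT : ∀ i, T (v i) = lam i • (v i : E)) :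
    LinearIndependent K fun i ↦ (v i : E) := by
  obtain ⟨S, hS⟩ := T.toFun.exists_extend
  refine Module.End.eigenvectors_linearIndependent' S lam hlam _ fun i ↦
    ⟨Module.End.mem_eigenspace_iff.mpr ?_, Subtype.coe_ne_coe.mpr (hv i)⟩
  rw [← hT]
  exact LinearMap.congr_fun hS (v i)

/-- The differential expression `-d²/dx² + q` as an unbounded operator on functions on the real
line, with domain the twice continuously differentiable functions. -/
noncomputable def schrodingerOperator (q : ℝ → ℂ) : (ℝ → ℂ) →ₗ.[ℂ] (ℝ → ℂ) where
  domain :=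
    { carrier := {f | ContDiff ℝ 2 f}
      add_mem' := fun hf hg ↦ ContDiff.add (mem_ofPred.mp hf) (mem_ofPred.mp hg)
      zero_mem' := mem_ofPred.mpr contDiff_const
      smul_mem' := fun c _ hf ↦ ContDiff.const_smul c (mem_ofPred.mp hf) }
  toFun :=
    { toFun := fun f x ↦ -iteratedDeriv 2 f x + q x * (f : ℝ → ℂ) x
      map_add' := fun f g ↦ by
        ext x
        have hf : ContDiff ℝ 2 (f : ℝ → ℂ) := f.2
        have hg : ContDiff ℝ 2 (g : ℝ → ℂ) := g.2
        simp only [Submodule.coe_add, iteratedDeriv_add hf.contDiffAt hg.contDiffAt, Pi.add_apply]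
        ring
      map_smul' := fun c f ↦ by
        ext x
        simp only [Submodule.coe_smul, iteratedDeriv_const_smul_field, Pi.smul_apply, smul_eq_mul,
          RingHom.id_apply]
        ring }

theorem mem_domain_schrodingerOperator {q f : ℝ → ℂ} :
    f ∈ (schrodingerOperator q).domain ↔ ContDiff ℝ 2 f :=
  Iff.rfl

theorem schrodingerOperator_apply {q : ℝ → ℂ} (f : (schrodingerOperator q).domain) (x : ℝ) :
    schrodingerOperator q f x = -iteratedDeriv 2 f x + q x * (f : ℝ → ℂ) x :=
  rfl

/-- `ψ` is a classical square-integrable eigenfunction of `-d²/dx² + q` on the real line, with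
eigenvalue `lam`. -/
structure IsL2Eigenfunction (q : ℝ → ℂ) (lam : ℂ) (ψ : ℝ → ℂ) : Prop where
  ne_zero : ψ ≠ 0
  contDiff : ContDiff ℝ 2 ψ
  memLp : MemLp ψ 2
  eigen_eq : ∀ x, -deriv (deriv ψ) x + q x * ψ x = lam * ψ x

theorem isEigenvalueICO_iff {lam : ℂ} :
    IsEigenvalueICO lam ↔ ∃ ψ, IsL2Eigenfunction (fun x ↦ Complex.I * x ^ 3) lam ψ := by
  refine exists_congr fun ψ ↦ ⟨fun ⟨hne, hdiff, hint, heq⟩ ↦ ⟨hne, hdiff, ?_, heq⟩,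
    fun h ↦ ⟨h.ne_zero, h.contDiff, ?_, h.eigen_eq⟩⟩
  · exact (memLp_two_iff_integrable_sq_norm hdiff.continuous.aestronglyMeasurable).mpr hint
  · exact (memLp_two_iff_integrable_sq_norm h.memLp.aestronglyMeasurable).mp h.memLp

namespace IsL2Eigenfunction

variable {q : ℝ → ℂ}

theorem linearIndependent {ι : Type*} {lam : ι → ℂ} (hlam : Function.Injective lam)
    {ψ : ι → ℝ → ℂ} (hψ : ∀ i, IsL2Eigenfunction q (lam i) (ψ i)) : LinearIndependent ℂ ψ := by
  refine linearIndependent_of_map_eq_smul (schrodingerOperator q) hlam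
    (v := fun i ↦ ⟨ψ i, mem_domain_schrodingerOperator.mpr (hψ i).contDiff⟩)
    (fun i ↦ Subtype.coe_ne_coe.mp (hψ i).ne_zero) fun i ↦ funext fun x ↦ ?_
  rw [schrodingerOperator_apply, Pi.smul_apply, smul_eq_mul, iteratedDeriv_succ, iteratedDeriv_one]
  exact (hψ i).eigen_eq x

theorem isL2Solution {lam : ℂ} {ψ : ℝ → ℂ} (hψ : IsL2Eigenfunction q lam ψ) (c : ℂ) :
    IsL2Solution (fun x ↦ q x + c) ψ (deriv ψ) fun x ↦ (lam + c) * ψ x := by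
  have hdiff' : ContDiff ℝ 1 (deriv ψ) :=
    (contDiff_succ_iff_deriv.mp (one_add_one_eq_two (R := WithTop ℕ∞) ▸ hψ.contDiff)).2.2
  refine ⟨fun x ↦ ?_, fun x ↦ ?_, hψ.memLp, hψ.memLp.const_mul _⟩
  · exact (hψ.contDiff.differentiable two_ne_zero x).hasDerivAt
  · refine (hdiff'.differentiable one_ne_zero x).hasDerivAt.congr_deriv ?_
    linear_combination -hψ.eigen_eq x

theorem add_one_ne_zero (hq : ∀ x, 0 ≤ (q x).re) (hq' : ∀ x, x ^ 4 ≤ x * (q x).im) {lam : ℂ}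
    {ψ : ℝ → ℂ} (hψ : IsL2Eigenfunction q lam ψ) : lam + 1 ≠ 0 := by
  intro hlam
  refine hψ.ne_zero (funext fun x ↦ ?_)
  have hle := (hψ.isL2Solution 1).one_add_sq_mul_norm_sq_le (fun x ↦ by simpa using hq x)
    (fun x ↦ by simpa using hq' x) x
  simp only [hlam, zero_mul, norm_zero, ne_eq, OfNat.ofNat_ne_zero, not_false_eq_true, zero_pow,
    integral_zero, mul_zero] at hle
  have hzero := nonpos_of_mul_nonpos_right hle (by positivity)
  simpa using hzero.antisymm (by positivity)

theorem sum_norm_add_one_inv_sq_le (hq : ∀ x, 0 ≤ (q x).re) (hq' : ∀ x, x ^ 4 ≤ x * (q x).im)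
    {n : ℕ} {lam : Fin n → ℂ} (hlam : Function.Injective lam) {ψ : Fin n → ℝ → ℂ}
    (hψ : ∀ i, IsL2Eigenfunction q (lam i) (ψ i)) :
    ∑ i, ‖(lam i + 1)⁻¹‖ ^ 2 ≤ 8 * Real.pi := by
  have hmem i := (hψ i).memLp
  rw [← integral_univ_inv_one_add_sq, ← integral_const_mul]
  refine sum_norm_sq_le_integral_of_norm_sq_le hmem
    (linearIndependent_toLp hmem (fun i ↦ (hψ i).contDiff.continuous) (linearIndependent hlam hψ))
    (integrable_inv_one_add_sq.const_mul 8) (fun x ↦ by positivity) fun a x ↦ ?_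
  have hsol := IsL2Solution.sum (fun i ↦ (hψ i).isL2Solution 1) fun i ↦ a i * (lam i + 1)⁻¹
  have hle := hsol.one_add_sq_mul_norm_sq_le (fun x ↦ by simpa using hq x)
    (fun x ↦ by simpa using hq' x) x
  have hcancel (i : Fin n) (y : ℝ) :
      a i * (lam i + 1)⁻¹ * ((lam i + 1) * ψ i y) = a i * ψ i y := by
    rw [mul_assoc, inv_mul_cancel_left₀ ((hψ i).add_one_ne_zero hq hq')]
  simp only [hcancel, mul_assoc (a _) _ (ψ _ x)] at hle
  rwa [mul_right_comm, ← div_eq_mul_inv, le_div_iff₀' (by positivity)]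

theorem finite_eigenvalues_norm_add_one_le (hq : ∀ x, 0 ≤ (q x).re)
    (hq' : ∀ x, x ^ 4 ≤ x * (q x).im) (M : ℝ) :
    {lam | (∃ ψ, IsL2Eigenfunction q lam ψ) ∧ ‖lam + 1‖ ≤ M}.Finite := by
  refine not_infinite.mp fun hinf ↦ ?_
  obtain ⟨n, hn⟩ := exists_nat_gt (M ^ 2 * (8 * Real.pi))
  set lam : Fin n → ℂ := fun i ↦ hinf.natEmbedding _ i
  have hlam : Function.Injective lam :=
    Subtype.val_injective.comp ((hinf.natEmbedding _).injective.comp Fin.val_injective)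
  choose ψ hψ using fun i : Fin n ↦ (hinf.natEmbedding _ i).2.1
  have hterm (i : Fin n) : 1 ≤ M ^ 2 * ‖(lam i + 1)⁻¹‖ ^ 2 := by
    have hpos : 0 < ‖lam i + 1‖ := norm_pos_iff.mpr ((hψ i).add_one_ne_zero hq hq')
    rw [norm_inv, inv_pow, ← div_eq_mul_inv, one_le_div (by positivity)]
    gcongr
    exact (hinf.natEmbedding _ i).2.2
  have hcard : (n : ℝ) ≤ M ^ 2 * (8 * Real.pi) := by
    calc (n : ℝ) = ∑ _i : Fin n, 1 := by simp
      _ ≤ ∑ i, M ^ 2 * ‖(lam i + 1)⁻¹‖ ^ 2 := Finset.sum_le_sum fun i _ ↦ hterm i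
      _ = M ^ 2 * ∑ i, ‖(lam i + 1)⁻¹‖ ^ 2 := (Finset.mul_sum ..).symm
      _ ≤ M ^ 2 * (8 * Real.pi) := by
          gcongr
          exact sum_norm_add_one_inv_sq_le hq hq' hlam hψ
  exact hn.not_ge hcard

end IsL2Eigenfunction

/-- The set of eigenvalues has no accumulation point in ℂ: the spectrum is discrete. -/
theorem eigenvalues_discrete :
    ∀ lam₀ : ℂ, ∃ r > (0 : ℝ), ∀ lam : ℂ, IsEigenvalueICO lam →
      ‖lam - lam₀‖ < r → lam = lam₀ := by
  intro lam₀
  have hfin := IsL2Eigenfunction.finite_eigenvalues_norm_add_one_le (q := fun x ↦ Complex.I * x ^ 3)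
    (fun x ↦ by simp [← Complex.ofReal_pow])
    (fun x ↦ by simp [← Complex.ofReal_pow, ← pow_succ']) (‖lam₀ + 1‖ + 1)
  obtain ⟨r, hr, hball⟩ := Metric.mem_nhds_iff.mp
    ((hfin.subset sdiff_subset).isClosed.isOpen_compl.mem_nhds (x := lam₀)
      (notMem_sdiff_of_mem (mem_singleton lam₀)))
  refine ⟨min r 1, by positivity, fun lam hlam hdist ↦ not_not.mp fun hne ↦ ?_⟩
  have hnorm : ‖lam + 1‖ ≤ ‖lam₀ + 1‖ + 1 := by
    calc ‖lam + 1‖ = ‖(lam₀ + 1) + (lam - lam₀)‖ := by ring_nf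
      _ ≤ ‖lam₀ + 1‖ + 1 := (norm_add_le _ _).trans (by gcongr; exact (lt_min_iff.mp hdist).2.le)
  exact hball (mem_ball_iff_norm.mpr (lt_min_iff.mp hdist).1)
    ⟨⟨isEigenvalueICO_iff.mp hlam, hnorm⟩, hne⟩
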